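/- Let N = (S, A, T) be a P/T Petri net and R ⊆ S × S a relation on places. If (m1, m2) ∈ R⊕ and m1' ⊆ m1 (multiset inclusion), then there exists a marking m2' ⊆ m2 such that (m1', m2') ∈ R⊕ and (m1 ⊖ m1', m2 ⊖ m2') ∈ R⊕, where ⊖ denotes multiset difference. -/

import Mathlib

/-- A transition of a P/T net: a triple (pre-set, label, post-set). -/
structure PNTrans (S A : Type) where
  pre : Multiset S
  label : A
  post : Multiset S
deriving DecidableEq

/-- A P/T Petri net over places `S` and labels `A`: a finite set of transitions,
each with a nonempty pre-set. -/
structure PetriNet (S A : Type) [DecidableEq S] [DecidableEq A] where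
  T : Finset (PNTrans S A)
  pre_ne : ∀ t ∈ T, t.pre ≠ 0

/-- The additive closure `R⊕` of a place relation `R`: the least relation on markings
containing `(θ, θ)` and closed under adding `R`-related places on both sides. -/
inductive AddClosure {S : Type} (R : S → S → Prop) : Multiset S → Multiset S → Prop
  | zero : AddClosure R 0 0
  | cons {s1 s2 : S} {m1 m2 : Multiset S} :
      R s1 s2 → AddClosure R m1 m2 → AddClosure R (s1 ::ₘ m1) (s2 ::ₘ m2)

theorem exists_le_rel_and_rel_sub {α β : Type*} [DecidableEq α] [DecidableEq β]
    {r : α → β → Prop} {s s' : Multiset α} {t : Multiset β}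
    (hst : Multiset.Rel r s t) (hle : s' ≤ s) :
    ∃ t' ≤ t, Multiset.Rel r s' t' ∧ Multiset.Rel r (s - s') (t - t') := by
  rw [← add_tsub_cancel_of_le hle, Multiset.rel_add_left] at hst
  obtain ⟨t', u, hs't', hsub, rfl⟩ := hst
  refine ⟨t', Multiset.le_add_right t' u, hs't', ?_⟩
  rwa [add_tsub_cancel_left]

theorem addClosure_iff_rel {S : Type} {R : S → S → Prop} {m1 m2 : Multiset S} :
    AddClosure R m1 m2 ↔ Multiset.Rel R m1 m2 := by
  constructor <;> intro h
  · induction h with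
    | zero => exact .zero
    | cons hR _ ih => exact .cons hR ih
  · induction h with
    | zero => exact .zero
    | cons hR _ ih => exact .cons hR ih

theorem addClosure_split_general {S : Type} [DecidableEq S] {R : S → S → Prop}
    {m1 m2 m1' : Multiset S} (h : AddClosure R m1 m2) (hle : m1' ≤ m1) :
    ∃ m2' : Multiset S, m2' ≤ m2 ∧ AddClosure R m1' m2' ∧
      AddClosure R (m1 - m1') (m2 - m2') := by
  simp only [addClosure_iff_rel] at h ⊢
  exact exists_le_rel_and_rel_sub h hle

/-- given `(m1, m2) ∈ R⊕` and `m1' ⊆ m1`, a matching sub-marking `m2' ⊆ m2`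
exists, with related remainders. -/
theorem addClosure_split {S A : Type} [Fintype S] [Fintype A]
    [DecidableEq S] [DecidableEq A] (N : PetriNet S A)
    (R : S → S → Prop) (m1 m2 m1' : Multiset S)
    (h : AddClosure R m1 m2) (hle : m1' ≤ m1) :
    ∃ m2' : Multiset S, m2' ≤ m2 ∧ AddClosure R m1' m2' ∧
      AddClosure R (m1 - m1') (m2 - m2') :=
  addClosure_split_general h hle
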